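/- (Proposition 1) Suppose (b*, σ*², η*) maximizes the augmented objective G over ℝ^{m₁m₂} × (0,∞) × (0,∞)^{m₁×m₂}; then (b*, σ*²) maximizes the group-bridge objective F over ℝ^{m₁m₂} × (0,∞). Conversely, if (b*, σ*²) maximizes F and ‖b*_{A_k,l}‖₁ > 0 for all k, l, then (b*, σ*², η*) maximizes G, where η*_{kl} = τ^{−γ} ((1−γ)/γ)^γ c_{kl} ‖b*_{A_k,l}‖₁^γ. -/

import Mathlib

/-!
Everything reduces to one variable at a time. For `x ≥ 0` (a group norm) and `c, η > 0`, the
weighted AM-GM inequality with weights `γ`, `1 - γ` gives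
`λ c x^γ ≤ c^(1/γ) η^(1-1/γ) x + τ η` (`bridge_le`), with equality at
`η = τ^(-γ) ((1-γ)/γ)^γ c x^γ` when `x > 0` (`bridge_eq`). When `x = 0` the infimum over `η > 0`
is `0` and is not attained, but it is approached as `η → 0` (`bridge_approx`).

Summing over the groups, `G(b, σ², η) ≤ F(b, σ²)` for every `η`, and
`F(b, σ²) = sup_η G(b, σ², η)`, attained at the stated `η*` when all group norms of `b` are
positive. Both directions of the theorem follow from these relations.
-/

open Finset Set Matrix

/-- Nested group ℓ¹-norm: `‖b_{A_k,l}‖₁ = ∑_{j=k}^{m₁} |b_{jl}|`. -/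
noncomputable def groupNorm (m₁ m₂ : ℕ) (b : Fin m₁ × Fin m₂ → ℝ)
    (k : Fin m₁) (l : Fin m₂) : ℝ :=
  ∑ j ∈ Finset.univ.filter (fun j : Fin m₁ => k ≤ j), |b (j, l)|

/-- Gaussian log-likelihood `ℓ(b,σ²) = -(n/2) log(2πσ²) - ‖y - Zb‖²/(2σ²)`. -/
noncomputable def loglik (n m₁ m₂ : ℕ) (y : Fin n → ℝ)
    (Z : Matrix (Fin n) (Fin m₁ × Fin m₂) ℝ) (b : Fin m₁ × Fin m₂ → ℝ) (σ2 : ℝ) : ℝ :=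
  -((n : ℝ) / 2) * Real.log (2 * Real.pi * σ2)
    - (∑ i, (y i - Z.mulVec b i) ^ 2) / (2 * σ2)

/-- Group-bridge objective `F(b,σ²)` with `λ = τ^(1-γ) γ^(-γ) (1-γ)^(γ-1)`. -/
noncomputable def Fobj (n m₁ m₂ : ℕ) (y : Fin n → ℝ)
    (Z : Matrix (Fin n) (Fin m₁ × Fin m₂) ℝ)
    (P : Matrix (Fin m₁ × Fin m₂) (Fin m₁ × Fin m₂) ℝ)
    (c : Fin m₁ → Fin m₂ → ℝ) (κ γ τ : ℝ)
    (b : Fin m₁ × Fin m₂ → ℝ) (σ2 : ℝ) : ℝ :=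
  loglik n m₁ m₂ y Z b σ2 - (n : ℝ) * κ * (b ⬝ᵥ P.mulVec b)
    - (n : ℝ) * (τ ^ (1 - γ) * γ ^ (-γ) * (1 - γ) ^ (γ - 1)) *
        ∑ l, ∑ k, c k l * (groupNorm m₁ m₂ b k l) ^ γ

/-- Augmented objective `G(b,σ²,η)`. -/
noncomputable def Gobj (n m₁ m₂ : ℕ) (y : Fin n → ℝ)
    (Z : Matrix (Fin n) (Fin m₁ × Fin m₂) ℝ)
    (P : Matrix (Fin m₁ × Fin m₂) (Fin m₁ × Fin m₂) ℝ)
    (c : Fin m₁ → Fin m₂ → ℝ) (κ γ τ : ℝ)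
    (b : Fin m₁ × Fin m₂ → ℝ) (σ2 : ℝ) (η : Fin m₁ → Fin m₂ → ℝ) : ℝ :=
  loglik n m₁ m₂ y Z b σ2 - (n : ℝ) * κ * (b ⬝ᵥ P.mulVec b)
    - (n : ℝ) * ∑ l, ∑ k,
        (c k l) ^ (1 / γ) * (η k l) ^ (1 - 1 / γ) * groupNorm m₁ m₂ b k l
    - (n : ℝ) * τ * ∑ l, ∑ k, η k l

theorem groupNorm_nonneg (m₁ m₂ : ℕ) (b : Fin m₁ × Fin m₂ → ℝ) (k : Fin m₁) (l : Fin m₂) :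
    0 ≤ groupNorm m₁ m₂ b k l :=
  Finset.sum_nonneg fun _ _ => abs_nonneg _

/-- The bridge penalty of one group lies below its weighted-lasso majorant, by weighted AM-GM. -/
theorem bridge_le {γ τ c x η : ℝ} (hγ0 : 0 < γ) (hγ1 : γ < 1) (hτ : 0 < τ) (hc : 0 < c)
    (hx : 0 ≤ x) (hη : 0 < η) :
    τ ^ (1 - γ) * γ ^ (-γ) * (1 - γ) ^ (γ - 1) * (c * x ^ γ) ≤
      c ^ (1 / γ) * η ^ (1 - 1 / γ) * x + τ * η := by
  have h1 : 0 < 1 - γ := by linarith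
  have hp1 : 0 ≤ c ^ (1 / γ) * η ^ (1 - 1 / γ) * x / γ := by positivity
  have hp2 : 0 ≤ τ * η / (1 - γ) := by positivity
  have key := Real.geom_mean_le_arith_mean2_weighted hγ0.le h1.le hp1 hp2 (by ring)
  have e1 : (c ^ (1 / γ) * η ^ (1 - 1 / γ) * x / γ) ^ γ
      = c * η ^ (γ - 1) * x ^ γ * γ ^ (-γ) := by
    rw [Real.div_rpow (by positivity) hγ0.le, Real.mul_rpow (by positivity) hx,
      Real.mul_rpow (by positivity) (by positivity), ← Real.rpow_mul hc.le,
      ← Real.rpow_mul hη.le, Real.rpow_neg hγ0.le, one_div_mul_cancel hγ0.ne', Real.rpow_one,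
      sub_mul, one_div_mul_cancel hγ0.ne', one_mul, div_eq_mul_inv]
  have e2 : (τ * η / (1 - γ)) ^ (1 - γ) = τ ^ (1 - γ) * η ^ (1 - γ) * (1 - γ) ^ (γ - 1) := by
    rw [Real.div_rpow (by positivity) h1.le, Real.mul_rpow hτ.le hη.le, div_eq_mul_inv,
      ← Real.rpow_neg h1.le, neg_sub]
  have e3 : η ^ (γ - 1) * η ^ (1 - γ) = 1 := by
    rw [← Real.rpow_add hη]; simp
  have e4 : γ * (c ^ (1 / γ) * η ^ (1 - 1 / γ) * x / γ) + (1 - γ) * (τ * η / (1 - γ))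
      = c ^ (1 / γ) * η ^ (1 - 1 / γ) * x + τ * η := by
    field_simp
  rw [e1, e2, e4] at key
  calc _ = τ ^ (1 - γ) * γ ^ (-γ) * (1 - γ) ^ (γ - 1) * (c * x ^ γ)
        * (η ^ (γ - 1) * η ^ (1 - γ)) := by rw [e3, mul_one]
    _ = c * η ^ (γ - 1) * x ^ γ * γ ^ (-γ) * (τ ^ (1 - γ) * η ^ (1 - γ) * (1 - γ) ^ (γ - 1)) := by
        ring
    _ ≤ _ := key

/-- The minimizing `η` in `bridge_le`, where equality holds. -/
theorem bridge_eq {γ τ c x η : ℝ} (hγ0 : 0 < γ) (hγ1 : γ < 1) (hτ : 0 < τ) (hc : 0 < c)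
    (hx : 0 < x) (hη : η = τ ^ (-γ) * ((1 - γ) / γ) ^ γ * c * x ^ γ) :
    c ^ (1 / γ) * η ^ (1 - 1 / γ) * x + τ * η =
      τ ^ (1 - γ) * γ ^ (-γ) * (1 - γ) ^ (γ - 1) * (c * x ^ γ) := by
  have h1 : 0 < 1 - γ := by linarith
  have hr : 0 < (1 - γ) / γ := by positivity
  have hηpos : 0 < η := by rw [hη]; positivity
  -- the stationarity equation for `η`
  have hpow : η ^ (1 / γ) = τ⁻¹ * ((1 - γ) / γ) * c ^ (1 / γ) * x := by
    rw [hη, Real.mul_rpow (by positivity) (by positivity),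
      Real.mul_rpow (by positivity) hc.le, Real.mul_rpow (by positivity) (by positivity),
      ← Real.rpow_mul hτ.le, ← Real.rpow_mul hr.le, ← Real.rpow_mul hx.le, neg_mul,
      mul_one_div_cancel hγ0.ne', Real.rpow_neg_one, Real.rpow_one, Real.rpow_one]
  have hC : 0 < c ^ (1 / γ) := by positivity
  have hsum : c ^ (1 / γ) * η ^ (1 - 1 / γ) * x + τ * η = τ * η / (1 - γ) := by
    rw [Real.rpow_sub hηpos, Real.rpow_one, hpow]
    field_simp
    ring
  rw [hsum, hη, Real.div_rpow h1.le hγ0.le, Real.rpow_neg hγ0.le, Real.rpow_sub h1,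
    Real.rpow_one, sub_eq_add_neg 1 γ, Real.rpow_add hτ, Real.rpow_one]
  field_simp

/-- The bridge penalty of one group is the infimum of its majorants, including when `x = 0`. -/
theorem bridge_approx {γ τ c x ε : ℝ} (hγ0 : 0 < γ) (hγ1 : γ < 1) (hτ : 0 < τ) (hc : 0 < c)
    (hx : 0 ≤ x) (hε : 0 < ε) :
    ∃ η : ℝ, 0 < η ∧ c ^ (1 / γ) * η ^ (1 - 1 / γ) * x + τ * η ≤
      τ ^ (1 - γ) * γ ^ (-γ) * (1 - γ) ^ (γ - 1) * (c * x ^ γ) + ε := by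
  have h1 : 0 < 1 - γ := by linarith
  rcases hx.eq_or_lt with rfl | hx
  · refine ⟨ε / τ, by positivity, ?_⟩
    rw [Real.zero_rpow hγ0.ne', mul_div_cancel₀ _ hτ.ne']
    simp
  · exact ⟨_, by positivity, (bridge_eq hγ0 hγ1 hτ hc hx rfl).trans_le (by linarith)⟩

/-- `F - G` as `n` times a sum of groupwise gaps between majorant and bridge penalty. -/
theorem Fobj_sub_Gobj (n m₁ m₂ : ℕ) (y : Fin n → ℝ)
    (Z : Matrix (Fin n) (Fin m₁ × Fin m₂) ℝ)
    (P : Matrix (Fin m₁ × Fin m₂) (Fin m₁ × Fin m₂) ℝ)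
    (c : Fin m₁ → Fin m₂ → ℝ) (κ γ τ : ℝ)
    (b : Fin m₁ × Fin m₂ → ℝ) (σ2 : ℝ) (η : Fin m₁ → Fin m₂ → ℝ) :
    Fobj n m₁ m₂ y Z P c κ γ τ b σ2 - Gobj n m₁ m₂ y Z P c κ γ τ b σ2 η =
      (n : ℝ) * ∑ l, ∑ k,
        ((c k l) ^ (1 / γ) * (η k l) ^ (1 - 1 / γ) * groupNorm m₁ m₂ b k l + τ * η k l
          - τ ^ (1 - γ) * γ ^ (-γ) * (1 - γ) ^ (γ - 1) *
            (c k l * (groupNorm m₁ m₂ b k l) ^ γ)) := by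
  simp only [Fobj, Gobj, Finset.sum_sub_distrib, Finset.sum_add_distrib, ← Finset.mul_sum]
  ring

/-- (Proposition 1)  If `(b*, σ*², η*)` maximizes `G` over
`ℝ^{m₁m₂} × (0,∞) × (0,∞)^{m₁×m₂}`, then `(b*, σ*²)` maximizes `F` over
`ℝ^{m₁m₂} × (0,∞)`.  Conversely, if `(b*, σ*²)` maximizes `F` and all nested group
norms of `b*` are positive, then `(b*, σ*², η*)` maximizes `G`, where
`η*_{kl} = τ^(-γ) ((1-γ)/γ)^γ c_{kl} ‖b*_{A_k,l}‖₁^γ`. -/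
theorem groupBridge_lasso_equiv (n m₁ m₂ : ℕ) (hn : 1 ≤ n) (hm₁ : 1 ≤ m₁) (hm₂ : 1 ≤ m₂)
    (y : Fin n → ℝ) (Z : Matrix (Fin n) (Fin m₁ × Fin m₂) ℝ)
    (P : Matrix (Fin m₁ × Fin m₂) (Fin m₁ × Fin m₂) ℝ) (hP : P.PosSemidef)
    (c : Fin m₁ → Fin m₂ → ℝ) (hc : ∀ k l, 0 < c k l)
    (κ γ τ : ℝ) (hκ : 0 < κ) (hγ0 : 0 < γ) (hγ1 : γ < 1) (hτ : 0 < τ)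
    (bstar : Fin m₁ × Fin m₂ → ℝ) (σstar2 : ℝ) (hσstar2 : 0 < σstar2) :
    (∀ ηstar : Fin m₁ → Fin m₂ → ℝ, (∀ k l, 0 < ηstar k l) →
      (∀ (b : Fin m₁ × Fin m₂ → ℝ) (σ2 : ℝ) (η : Fin m₁ → Fin m₂ → ℝ),
          0 < σ2 → (∀ k l, 0 < η k l) →
          Gobj n m₁ m₂ y Z P c κ γ τ b σ2 η ≤
            Gobj n m₁ m₂ y Z P c κ γ τ bstar σstar2 ηstar) →
      ∀ (b : Fin m₁ × Fin m₂ → ℝ) (σ2 : ℝ), 0 < σ2 →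
        Fobj n m₁ m₂ y Z P c κ γ τ b σ2 ≤ Fobj n m₁ m₂ y Z P c κ γ τ bstar σstar2) ∧
    ((∀ (b : Fin m₁ × Fin m₂ → ℝ) (σ2 : ℝ), 0 < σ2 →
        Fobj n m₁ m₂ y Z P c κ γ τ b σ2 ≤ Fobj n m₁ m₂ y Z P c κ γ τ bstar σstar2) →
      (∀ k l, 0 < groupNorm m₁ m₂ bstar k l) →
      ∀ (b : Fin m₁ × Fin m₂ → ℝ) (σ2 : ℝ) (η : Fin m₁ → Fin m₂ → ℝ),
        0 < σ2 → (∀ k l, 0 < η k l) →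
        Gobj n m₁ m₂ y Z P c κ γ τ b σ2 η ≤
          Gobj n m₁ m₂ y Z P c κ γ τ bstar σstar2
            (fun k l => τ ^ (-γ) * ((1 - γ) / γ) ^ γ * c k l *
              (groupNorm m₁ m₂ bstar k l) ^ γ)) := by
  have hGF : ∀ (b : Fin m₁ × Fin m₂ → ℝ) (σ2 : ℝ) (η : Fin m₁ → Fin m₂ → ℝ),
      (∀ k l, 0 < η k l) →
      Gobj n m₁ m₂ y Z P c κ γ τ b σ2 η ≤ Fobj n m₁ m₂ y Z P c κ γ τ b σ2 := by
    intro b σ2 η hη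
    rw [← sub_nonneg, Fobj_sub_Gobj]
    refine mul_nonneg n.cast_nonneg (Finset.sum_nonneg fun l _ => Finset.sum_nonneg fun k _ => ?_)
    exact sub_nonneg.2
      (bridge_le hγ0 hγ1 hτ (hc k l) (groupNorm_nonneg m₁ m₂ b k l) (hη k l))
  refine ⟨fun ηstar hηstar hG b σ2 hσ2 => ?_, fun hF hpos b σ2 η hσ2 hη => ?_⟩
  · refine (le_of_forall_pos_le_add fun ε hε => ?_).trans (hGF bstar σstar2 ηstar hηstar)
    have hn' : (0 : ℝ) < n := by exact_mod_cast hn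
    have hm₁' : (0 : ℝ) < m₁ := by exact_mod_cast hm₁
    have hm₂' : (0 : ℝ) < m₂ := by exact_mod_cast hm₂
    -- distribute `ε` evenly over the `n * m₁ * m₂` unit contributions to `F - G`
    have hδ : 0 < ε / (n * (m₂ * m₁)) := by positivity
    choose η hη hηle using fun k l =>
      bridge_approx hγ0 hγ1 hτ (hc k l) (groupNorm_nonneg m₁ m₂ b k l) hδ
    have hle : Fobj n m₁ m₂ y Z P c κ γ τ b σ2 - Gobj n m₁ m₂ y Z P c κ γ τ b σ2 η ≤ ε := by
      rw [Fobj_sub_Gobj]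
      calc _ ≤ (n : ℝ) * ∑ _l : Fin m₂, ∑ _k : Fin m₁, ε / (n * (m₂ * m₁)) := by
            gcongr with l _ k _
            linarith [hηle k l]
        _ = ε := by
            simp only [Finset.sum_const, Finset.card_univ, Fintype.card_fin, nsmul_eq_mul]
            field_simp
    linarith [hG b σ2 η hσ2 hη]
  · refine (hGF b σ2 η hη).trans ((hF b σ2 hσ2).trans (le_of_eq ?_))
    rw [← sub_eq_zero, Fobj_sub_Gobj]
    refine mul_eq_zero_of_right _ (Finset.sum_eq_zero fun l _ => Finset.sum_eq_zero fun k _ => ?_)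
    exact sub_eq_zero.2 (bridge_eq hγ0 hγ1 hτ (hc k l) (hpos k l) rfl)
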